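/- In the RRM setting, suppose additionally that C_log is convex. Then the associated MARM ρ is convex on C_log (ρ(αY_1 + (1−α)Y_2) ≤ αρ(Y_1) + (1−α)ρ(Y_2) for all Y_1, Y_2 ∈ C_log, α ∈ (0,1), extended-real arithmetic) if and only if the MARRM η is logconvex: η(X^α Y^{1−α}) ≤ η(X)^α · η(Y)^{1−α} for all X, Y ∈ C and α ∈ (0,1) (arithmetic in [0,∞]). -/

import Mathlib

open MeasureTheory Filter Set ENNReal

/-- The set of strictly positive random variables (positive representatives of
elements of `L⁰₊₊`). -/
def L0pos (Ω : Type*) : Set (Ω → ℝ) := {X | ∀ ω, 0 < X ω}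

/-- The multi-asset return risk measure (MARRM) associated with the security set `S`,
the relative acceptance set `B` and the pricing map `π`:
`η(X) = inf {π(Z) : Z ∈ S, X/Z ∈ B}`, with `inf ∅ = ∞`. -/
noncomputable def marrm {Ω : Type*} (S B : Set (Ω → ℝ)) (π : (Ω → ℝ) → ℝ) (X : Ω → ℝ) : ℝ≥0∞ :=
  sInf ((fun Z => ENNReal.ofReal (π Z)) '' {Z | Z ∈ S ∧ (fun ω => X ω / Z ω) ∈ B})

/-- `L^∞₊₊`: strictly positive, (essentially) bounded random variables. -/
def LinftyPos {Ω : Type*} [MeasurableSpace Ω] (P : Measure Ω) : Set (Ω → ℝ) :=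
  {X | (∀ ω, 0 < X ω) ∧ ∃ c : ℝ, ∀ᵐ ω ∂P, X ω ≤ c}

/-- The image of a set of random variables under the pointwise logarithm,
e.g. `C_log = {log X : X ∈ C}`. -/
def logIm {Ω : Type*} (A : Set (Ω → ℝ)) : Set (Ω → ℝ) :=
  (fun X => fun ω => Real.log (X ω)) '' A

/-- The multi-asset risk measure (MARM) with security set `Slog`, acceptance set `Anu`
and pricing map `πlog`: `ρ(Y) = inf {πlog(L) : L ∈ Slog, Y - L ∈ Anu}`, with
values in `[-∞,∞]` and `inf ∅ = +∞`. -/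
noncomputable def marm {Ω : Type*} (Slog Anu : Set (Ω → ℝ)) (πlog : (Ω → ℝ) → ℝ)
    (Y : Ω → ℝ) : EReal :=
  sInf ((fun L => (πlog L : EReal)) '' {L | L ∈ Slog ∧ (fun ω => Y ω - L ω) ∈ Anu})

/-- The relative acceptance set `B_ρ̃ = {X ∈ K : ρ̃(X) ≤ 1}` induced by a
return risk measure `ρt` on `K`. -/
def rrmAccept {Ω : Type*} (K : Set (Ω → ℝ)) (ρt : (Ω → ℝ) → ℝ) : Set (Ω → ℝ) :=
  {X | X ∈ K ∧ ρt X ≤ 1}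

/-- The MARM associated with a return risk measurement regime `(B_ρ̃, S, π)` in the
RRM setting: security set `S_log`, acceptance set `A_ν = {Y ∈ K_log : ν(Y) ≤ 0}` with
`ν = log ∘ ρ̃ ∘ exp`, and pricing map `π_log = log ∘ π ∘ exp`. -/
noncomputable def marmOf {Ω : Type*} (S K : Set (Ω → ℝ)) (π ρt : (Ω → ℝ) → ℝ) :
    (Ω → ℝ) → EReal :=
  marm (logIm S) {L | L ∈ logIm K ∧ Real.log (ρt (fun ω => Real.exp (L ω))) ≤ 0}
    (fun L => Real.log (π (fun ω => Real.exp (L ω))))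


theorem marm_aux_log {Ω : Type*} (S K : Set (Ω → ℝ)) (π ρt : (Ω → ℝ) → ℝ)
    (hSpos : S ⊆ L0pos Ω) (hπpos : ∀ Z ∈ S, 0 < π Z) (hKpos : K ⊆ L0pos Ω)
    (hρpos : ∀ X ∈ K, 0 < ρt X) (X : Ω → ℝ) (hX : X ∈ L0pos Ω) :
    marmOf S K π ρt (fun ω => Real.log (X ω))
      = ENNReal.log (marrm S (rrmAccept K ρt) π X) := by
  have hexp : ∀ Z ∈ L0pos Ω, (fun ω => Real.exp (Real.log (Z ω))) = Z := by
    intro Z hZ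
    funext ω
    exact Real.exp_log (hZ ω)
  have hdiv : ∀ Z ∈ L0pos Ω,
      (fun ω => Real.log (X ω / Z ω)) = fun ω => Real.log (X ω) - Real.log (Z ω) := by
    intro Z hZ
    funext ω
    exact Real.log_div (hX ω).ne' (hZ ω).ne'
  have hdp : ∀ Z ∈ L0pos Ω, (fun ω => X ω / Z ω) ∈ L0pos Ω :=
    fun Z hZ ω => div_pos (hX ω) (hZ ω)
  have hlog : ∀ Z ∈ S,
      ENNReal.log (ENNReal.ofReal (π Z)) = ((Real.log (π Z) : ℝ) : EReal) := by
    intro Z hZ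
    exact ENNReal.log_ofReal_of_pos (hπpos Z hZ)
  unfold marmOf marm marrm
  rw [← ENNReal.logOrderIso_apply, OrderIso.map_sInf_eq_sInf_symm_preimage,
    ← OrderIso.image_eq_preimage_symm, Set.image_image]
  congr 1
  ext r
  constructor
  · rintro ⟨L, ⟨⟨Z, hZ, rfl⟩, ⟨W, hW, hWe⟩, hν⟩, rfl⟩
    have hZp := hSpos hZ
    have hWp := hKpos hW
    have hWX : W = fun ω => X ω / Z ω := by
      rw [← hexp W hWp, ← hexp _ (hdp Z hZp)]
      funext ω
      have h1 := congrFun hWe ω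
      have h2 := congrFun (hdiv Z hZp) ω
      simp only at h1 h2
      rw [h1, h2]
    refine ⟨Z, ⟨hZ, hWX ▸ hW, ?_⟩, ?_⟩
    · rw [← hWe] at hν
      simp only [hexp W hWp] at hν
      rw [← hWX]
      exact (Real.log_nonpos_iff (hρpos W hW).le).1 hν
    · simp only [ENNReal.logOrderIso_apply, hlog Z hZ, hexp Z hZp]
  · rintro ⟨Z, ⟨hZ, hK, hle⟩, rfl⟩
    have hZp := hSpos hZ
    refine ⟨fun ω => Real.log (Z ω), ⟨⟨Z, hZ, rfl⟩, ⟨_, hK, hdiv Z hZp⟩, ?_⟩, ?_⟩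
    · have e : (fun ω => Real.exp (Real.log (X ω) - Real.log (Z ω))) = fun ω => X ω / Z ω := by
        funext ω
        rw [Real.exp_sub, Real.exp_log (hX ω), Real.exp_log (hZp ω)]
      simp only [e]
      exact (Real.log_nonpos_iff (hρpos _ hK).le).2 hle
    · simp only [ENNReal.logOrderIso_apply, hlog Z hZ, hexp Z hZp]

theorem marm_convex_iff_marrm_logconvex {Ω : Type*} [MeasurableSpace Ω] (P : Measure Ω) [IsProbabilityMeasure P]
    (C S K : Set (Ω → ℝ)) (π ρt : (Ω → ℝ) → ℝ)
    (hCne : C.Nonempty) (hCpos : C ⊆ L0pos Ω)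
    (hSne : S.Nonempty) (hSpos : S ⊆ L0pos Ω)
    (hπpos : ∀ Z ∈ S, 0 < π Z)
    (hKne : K.Nonempty) (hKpos : K ⊆ L0pos Ω)
    (hKcone : ∀ l : ℝ, 0 < l → ∀ X ∈ K, (fun ω => l * X ω) ∈ K)
    (hKinf : LinftyPos P ⊆ K)
    (hcompat : ∀ X ∈ C, ∀ Z ∈ S, (fun ω => X ω / Z ω) ∈ K)
    (hCmul : ∀ X ∈ C, ∀ Y ∈ C, (fun ω => X ω * Y ω) ∈ C)
    (hCone : (fun _ => (1:ℝ)) ∈ C)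
    (hCinv : ∀ X ∈ C, (fun ω => (X ω)⁻¹) ∈ C)
    (hρmono : ∀ X ∈ K, ∀ Y ∈ K, (∀ᵐ ω ∂P, X ω ≤ Y ω) → ρt X ≤ ρt Y)
    (hρhom : ∀ l : ℝ, 0 < l → ∀ X ∈ K, ρt (fun ω => l * X ω) = l * ρt X)
    (hρpos : ∀ X ∈ K, 0 < ρt X)
    (hρone : ρt (fun _ => (1:ℝ)) = 1)
    (hClogconv : ∀ Y1 ∈ logIm C, ∀ Y2 ∈ logIm C, ∀ a ∈ Set.Ioo (0:ℝ) 1,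
      (fun ω => a * Y1 ω + (1 - a) * Y2 ω) ∈ logIm C) :
    (∀ Y1 ∈ logIm C, ∀ Y2 ∈ logIm C, ∀ a ∈ Set.Ioo (0:ℝ) 1,
        marmOf S K π ρt (fun ω => a * Y1 ω + (1 - a) * Y2 ω)
          ≤ (a : EReal) * marmOf S K π ρt Y1 + ((1 - a : ℝ) : EReal) * marmOf S K π ρt Y2)
      ↔ (∀ X ∈ C, ∀ Y ∈ C, ∀ a ∈ Set.Ioo (0:ℝ) 1,
        marrm S (rrmAccept K ρt) π (fun ω => X ω ^ a * Y ω ^ (1 - a))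
          ≤ marrm S (rrmAccept K ρt) π X ^ a * marrm S (rrmAccept K ρt) π Y ^ (1 - a)) := by
  have key := marm_aux_log S K π ρt hSpos hπpos hKpos hρpos
  have main : ∀ X ∈ C, ∀ Y ∈ C, ∀ a : ℝ,
      (marmOf S K π ρt (fun ω => a * Real.log (X ω) + (1 - a) * Real.log (Y ω))
          ≤ (a : EReal) * marmOf S K π ρt (fun ω => Real.log (X ω))
            + ((1 - a : ℝ) : EReal) * marmOf S K π ρt (fun ω => Real.log (Y ω)))
      ↔ marrm S (rrmAccept K ρt) π (fun ω => X ω ^ a * Y ω ^ (1 - a))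
          ≤ marrm S (rrmAccept K ρt) π X ^ a * marrm S (rrmAccept K ρt) π Y ^ (1 - a) := by
    intro X hX Y hY a
    have hXp := hCpos hX
    have hYp := hCpos hY
    have e : (fun ω => a * Real.log (X ω) + (1 - a) * Real.log (Y ω))
        = fun ω => Real.log (X ω ^ a * Y ω ^ (1 - a)) := by
      funext ω
      rw [Real.log_mul (Real.rpow_pos_of_pos (hXp ω) _).ne'
        (Real.rpow_pos_of_pos (hYp ω) _).ne', Real.log_rpow (hXp ω), Real.log_rpow (hYp ω)]
    rw [e, key X hXp, key Y hYp, key (fun ω => X ω ^ a * Y ω ^ (1 - a))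
      (fun ω => mul_pos (Real.rpow_pos_of_pos (hXp ω) _) (Real.rpow_pos_of_pos (hYp ω) _)),
      ← ENNReal.log_rpow, ← ENNReal.log_rpow, ← ENNReal.log_mul_add,
      ENNReal.log_le_log_iff]
  constructor
  · intro h X hX Y hY a ha
    exact (main X hX Y hY a).1 (h _ ⟨X, hX, rfl⟩ _ ⟨Y, hY, rfl⟩ a ha)
  · rintro h _ ⟨X, hX, rfl⟩ _ ⟨Y, hY, rfl⟩ a ha
    exact (main X hX Y hY a).2 (h X hX Y hY a ha)
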